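/- For every N ≥ 3 and all indices i₁, …, i_N ∈ {0,1}, the ring-network quantum distribution satisfies P_Q(a₁ = 1_{i₁}, …, a_N = 1_{i_N}) = 2^{−N}·(∏_{n=1}^N u_{i_n} + ∏_{n=1}^N v_{i_n})², i.e. |⟨1̄_{i₁}⊗⋯⊗1̄_{i_N} | (ψ⁺)^{⊗N}⟩|² = 2^{−N}(∏_n u_{i_n} + ∏_n v_{i_n})², where the tensor factors are matched according to the ring wiring. -/

import Mathlib

open MeasureTheory

noncomputable def uco (u : ℝ) : Fin 2 → ℝ := ![u, Real.sqrt (1 - u ^ 2)]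
noncomputable def vco (u : ℝ) : Fin 2 → ℝ := ![Real.sqrt (1 - u ^ 2), -u]

inductive Outc where
  | zero : Outc
  | one : Fin 2 → Outc
  | two : Outc
  deriving DecidableEq, Fintype

noncomputable def psiPlus : Fin 2 → Fin 2 → ℝ := fun i j =>
  if i = 0 ∧ j = 1 then (Real.sqrt 2)⁻¹ else if i = 1 ∧ j = 0 then (Real.sqrt 2)⁻¹ else 0

noncomputable def basisVec (u : ℝ) : Outc → Fin 2 → Fin 2 → ℝ
  | Outc.zero => fun l r => if l = 0 ∧ r = 0 then 1 else 0
  | Outc.one i => fun l r => if l = 0 ∧ r = 1 then uco u i else if l = 1 ∧ r = 0 then vco u i else 0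
  | Outc.two => fun l r => if l = 1 ∧ r = 1 then 1 else 0

def finNext {N : ℕ} (k : Fin N) : Fin N := ⟨(k.val + 1) % N, Nat.mod_lt _ k.pos⟩

noncomputable def ringAmp (N : ℕ) (u : ℝ) (a : Fin N → Outc) : ℝ :=
  ∑ L : Fin N → Fin 2, ∑ R : Fin N → Fin 2,
    (∏ k, basisVec u (a k) (L k) (R k)) * ∏ k, psiPlus (R k) (L (finNext k))

noncomputable def ringP (N : ℕ) (u : ℝ) (a : Fin N → Outc) : ℝ := ringAmp N u a ^ 2

/-- Contracting the measurement vector of a party with the source on its right. -/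
lemma sum_basisVec_one_mul_psiPlus (u : ℝ) (i l m : Fin 2) :
    ∑ r, basisVec u (Outc.one i) l r * psiPlus r m =
      if m = l then (Real.sqrt 2)⁻¹ * (if l = 0 then uco u i else vco u i) else 0 := by
  fin_cases l <;> fin_cases m <;> simp [basisVec, psiPlus, mul_comm]

/-- A function on the ring that is invariant under the successor is constant. -/
lemma eq_of_finNext_invariant {N : ℕ} {α : Type*} (hN : 0 < N) (L : Fin N → α)
    (h : ∀ k, L (finNext k) = L k) (k : Fin N) : L k = L ⟨0, hN⟩ := by
  obtain ⟨k, hk⟩ := k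
  induction k with
  | zero => rfl
  | succ k ih =>
    rw [← ih (by omega), ← h ⟨k, by omega⟩]
    congr 1
    simp [finNext, Nat.mod_eq_of_lt hk]

lemma ringAmp_one {N : ℕ} (hN : 0 < N) (u : ℝ) (i : Fin N → Fin 2) :
    ringAmp N u (fun k => Outc.one (i k)) =
      (Real.sqrt 2)⁻¹ ^ N * (∏ n, uco u (i n) + ∏ n, vco u (i n)) := by
  have contract (L : Fin N → Fin 2) :
      ∑ R : Fin N → Fin 2, (∏ k, basisVec u (Outc.one (i k)) (L k) (R k)) *
        ∏ k, psiPlus (R k) (L (finNext k)) =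
      ∏ k, if L (finNext k) = L k then
        (Real.sqrt 2)⁻¹ * (if L k = 0 then uco u (i k) else vco u (i k)) else 0 := by
    simp_rw [← sum_basisVec_one_mul_psiPlus, ← Finset.prod_mul_distrib]
    rw [Finset.prod_univ_sum, Fintype.piFinset_univ]
  have hne : (fun _ : Fin N => (0 : Fin 2)) ≠ fun _ => 1 := fun h => by
    simpa using congrFun h ⟨0, hN⟩
  unfold ringAmp
  simp_rw [contract]
  rw [← Finset.sum_subset (Finset.subset_univ {fun _ => 0, fun _ => 1}), Finset.sum_pair hne]
  · simp [Finset.prod_mul_distrib, mul_add]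
  · intro L _ hL
    obtain ⟨k, hk⟩ : ∃ k, L (finNext k) ≠ L k := by
      by_contra! h
      have hconst := eq_of_finNext_invariant hN L h
      apply hL
      rw [Finset.mem_insert, Finset.mem_singleton]
      rcases Fin.exists_fin_two.mp ⟨L ⟨0, hN⟩, rfl⟩ with h0 | h1
      · exact Or.inl (funext fun k => (hconst k).trans h0)
      · exact Or.inr (funext fun k => (hconst k).trans h1)
    exact Finset.prod_eq_zero (Finset.mem_univ k) (if_neg hk)

/-- probability of the all-`1` outcomes on the `N`-party ring:
`P_Q(1_{i₁},…,1_{i_N}) = 2^{-N} (∏ u_{i_n} + ∏ v_{i_n})²`. -/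
theorem stmt_13 (N : ℕ) (hN : 3 ≤ N) (u : ℝ) (hu0 : 0 < u) (hu1 : u < 1)
    (i : Fin N → Fin 2) :
    ringP N u (fun k => Outc.one (i k)) =
      ((2 : ℝ) ^ N)⁻¹ * (∏ n, uco u (i n) + ∏ n, vco u (i n)) ^ 2 := by
  rw [ringP, ringAmp_one (by omega), mul_pow, ← pow_mul, mul_comm N 2, pow_mul, inv_pow,
    Real.sq_sqrt zero_le_two, inv_pow]
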